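/- Under the stated assumptions on U, the coefficient functions, the function D and the constants δ1,…,δ6 (in particular 1/c1 < δ5 − δ4²/δ3), every strong global solution x of the system x'''(t) + β2(t)x''(t) + β1(t)x'(t) + β0(t)U(φ_x(t)) = 0 satisfies: for every x* ∈ Z(U), with y(t) = ‖x(t) − x*‖², one has lim_{t→∞} y'(t) = 0 and lim_{t→∞} y''(t) = 0, and moreover lim_{t→∞} ‖U(x(t))‖ = 0. -/

import Mathlib

open MeasureTheory Filter Topology InnerProductSpace

/-- A function `h : ℝ → H` is locally absolutely continuous on `[t0, ∞)` if on each
interval `[t0, t]` it is the integral of a locally integrable function plus its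
initial value. -/
def LocallyAbsolutelyContinuousFrom {H : Type*} [NormedAddCommGroup H] [NormedSpace ℝ H]
    (t0 : ℝ) (h : ℝ → H) : Prop :=
  ∃ g : ℝ → H, (∀ t, t0 ≤ t → IntervalIntegrable g MeasureTheory.volume t0 t) ∧
    ∀ t, t0 ≤ t → h t = h t0 + ∫ s in t0..t, g s

/-- `x` is a strong global solution of the third-order dynamical system
`x'''(t) + β2(t)x''(t) + β1(t)x'(t) + β0(t) U(x(t) + λ1(t)x'(t) + λ2(t)x''(t)) = 0`
on `[t0, ∞)`. -/
def IsStrongGlobalSolution {H : Type*} [NormedAddCommGroup H] [NormedSpace ℝ H]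
    (t0 : ℝ) (β0 β1 β2 lam1 lam2 : ℝ → ℝ) (U : H → H) (x : ℝ → H) : Prop :=
  LocallyAbsolutelyContinuousFrom t0 x ∧
  LocallyAbsolutelyContinuousFrom t0 (deriv x) ∧
  LocallyAbsolutelyContinuousFrom t0 (deriv (deriv x)) ∧
  ∀ᵐ t ∂(MeasureTheory.volume), t0 ≤ t →
    deriv (deriv (deriv x)) t + β2 t • deriv (deriv x) t + β1 t • deriv x t +
      β0 t • U (x t + lam1 t • deriv x t + lam2 t • deriv (deriv x) t) = 0

/- The proof is by a Lyapunov argument. For `X = x - x*`, `y = ‖X‖²` and `u = ‖x'‖²`, consider the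
energy `y'' + β₂ y' + (β₁ - β₂') y + A₂ u' + (A₁ - A₂') u + B₁ ‖x''‖²`. Differentiating it and
eliminating `U(φ)` with the equation, quasi-cocoercivity and Young's inequality with weight `D` make
its derivative at most `-δ (‖x'‖² + ‖x''‖² + ‖x'''‖²)`; the monotonicity and convexity of the
coefficients make the remaining terms nonpositive. The condition `1 / c₁ < δ₅ - δ₄² / δ₃` makes the
energy minus `β₂ y'` dominate a positive definite quadratic form in `‖X‖`, `‖x'‖`, `‖x''‖`, which
bounds first `x`, then `x'` and `x''`. Hence `‖x'‖² + ‖x''‖² + ‖x'''‖²` is integrable, and it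
dominates `‖U(x)‖²`; Barbalat's lemma gives `x', x'', U(x) → 0`, and the limits of `y'` and `y''`
follow. -/

namespace LocallyAbsolutelyContinuousFrom

variable {E : Type*} [NormedAddCommGroup E] [NormedSpace ℝ E] {t₀ t : ℝ} {h k : ℝ → E}

lemma continuousOn (hh : LocallyAbsolutelyContinuousFrom t₀ h) :
    ContinuousOn h (Set.Ici t₀) := by
  obtain ⟨g, hg, h_eq⟩ := hh
  intro t ht
  have hlt : t < t + 1 := lt_add_one t
  have hle : t₀ ≤ t + 1 := le_trans ht hlt.le
  have h_Icc : ContinuousOn h (Set.Icc t₀ (t + 1)) := by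
    have h_int := intervalIntegral.continuousOn_primitive_interval' (hg _ hle) Set.left_mem_uIcc
    rw [Set.uIcc_of_le hle] at h_int
    exact (h_int.const_add (h t₀)).congr fun u hu => h_eq u hu.1
  refine (h_Icc t ⟨ht, hlt.le⟩).mono_of_mem_nhdsWithin ?_
  filter_upwards [self_mem_nhdsWithin, mem_nhdsWithin_of_mem_nhds (Iic_mem_nhds hlt)] with u hu hu'
  exact ⟨hu, hu'⟩

variable [CompleteSpace E]

lemma intervalIntegrable_deriv_and_eq_add_integral_deriv
    (hh : LocallyAbsolutelyContinuousFrom t₀ h) (ht : t₀ ≤ t) :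
    IntervalIntegrable (deriv h) volume t₀ t ∧ h t = h t₀ + ∫ s in t₀..t, deriv h s := by
  obtain ⟨g, hg, h_eq⟩ := hh
  have h_ae : ∀ᵐ s ∂volume, s ∈ Set.uIoc t₀ t → g s = deriv h s := by
    filter_upwards [(hg t ht).ae_hasDerivAt_integral] with s hs hs_mem
    have h_near : h =ᶠ[𝓝 s] fun u => h t₀ + ∫ r in t₀..u, g r := by
      rw [Set.uIoc_of_le ht] at hs_mem
      filter_upwards [Ioi_mem_nhds hs_mem.1] with u hu
      exact h_eq u (le_of_lt hu)
    have h_prim := hs (Set.uIoc_subset_uIcc hs_mem) t₀ Set.left_mem_uIcc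
    exact ((h_prim.const_add (h t₀)).congr_of_eventuallyEq h_near).deriv.symm
  refine ⟨(hg t ht).congr_ae ((ae_restrict_iff' measurableSet_uIoc).2 h_ae), ?_⟩
  rw [h_eq t ht, intervalIntegral.integral_congr_ae h_ae]

lemma hasDerivAt_of_ae_deriv_eq (hh : LocallyAbsolutelyContinuousFrom t₀ h)
    (hk : ContinuousOn k (Set.Ioi t₀)) (h_ae : ∀ᵐ s ∂volume, t₀ ≤ s → deriv h s = k s)
    (ht : t₀ < t) : HasDerivAt h (k t) t := by
  have h_ae_uIoc {u : ℝ} (hu : t₀ ≤ u) : ∀ᵐ s ∂volume, s ∈ Set.uIoc t₀ u → deriv h s = k s := by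
    filter_upwards [h_ae] with s hs hs_mem
    rw [Set.uIoc_of_le hu] at hs_mem
    exact hs hs_mem.1.le
  have hk_int : IntervalIntegrable k volume t₀ t :=
    (hh.intervalIntegrable_deriv_and_eq_add_integral_deriv ht.le).1.congr_ae
      ((ae_restrict_iff' measurableSet_uIoc).2 (h_ae_uIoc ht.le))
  have h_prim := intervalIntegral.integral_hasDerivAt_right hk_int
    (hk.stronglyMeasurableAtFilter isOpen_Ioi t ht) (hk.continuousAt (Ioi_mem_nhds ht))
  refine (h_prim.const_add (h t₀)).congr_of_eventuallyEq ?_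
  filter_upwards [Ioi_mem_nhds ht] with u hu
  have hu' : t₀ ≤ u := le_of_lt hu
  rw [(hh.intervalIntegrable_deriv_and_eq_add_integral_deriv hu').2,
    intervalIntegral.integral_congr_ae (h_ae_uIoc hu')]

end LocallyAbsolutelyContinuousFrom

section HalfLine

variable {E : Type*} [NormedAddCommGroup E]

lemma integrableAtFilter_atTop_of_hasDerivAt_le_neg {V V' g : ℝ → ℝ} {t₀ B : ℝ}
    (hV : ∀ t, t₀ < t → HasDerivAt V (V' t) t) (hV' : ∀ t, t₀ < t → V' t ≤ -g t)
    (hB : ∀ᶠ t in atTop, B ≤ V t) (hg : ContinuousOn g (Set.Ioi t₀))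
    (hg_nonneg : ∀ t, t₀ < t → 0 ≤ g t) : IntegrableAtFilter g atTop := by
  set a := t₀ + 1
  have ha {t : ℝ} (ht : a ≤ t) : t₀ < t := (lt_add_one t₀).trans_le ht
  have hg_int (t : ℝ) : IntegrableOn g (Set.Icc a t) :=
    (hg.mono fun s hs => ha hs.1).integrableOn_Icc
  refine ⟨Set.Ioi a, Ioi_mem_atTop a, integrableOn_Ioi_of_intervalIntegral_norm_bounded (V a - B) a
    (fun t => (hg_int t).mono_set Set.Ioc_subset_Icc_self) tendsto_id ?_⟩
  filter_upwards [hB, eventually_ge_atTop a] with t hBt hat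
  have h_norm : ∫ s in a..t, ‖g s‖ = ∫ s in a..t, g s := by
    refine intervalIntegral.integral_congr fun s hs => ?_
    rw [Set.uIcc_of_le hat] at hs
    exact Real.norm_of_nonneg (hg_nonneg s (ha hs.1))
  have h_drop : V t - V a ≤ ∫ s in a..t, -g s :=
    intervalIntegral.sub_le_integral_of_hasDeriv_right_of_le hat
      (fun s hs => (hV s (ha hs.1)).continuousAt.continuousWithinAt)
      (fun s hs => (hV s (ha hs.1.le)).hasDerivWithinAt) (hg_int t).neg
      fun s hs => hV' s (ha hs.1.le)
  rw [intervalIntegral.integral_neg] at h_drop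
  linarith

lemma exists_uniformContinuousOn_Ici_of_isBigO_one [NormedSpace ℝ E] {f f' : ℝ → E} {t₀ : ℝ}
    (hf : ∀ t, t₀ < t → HasDerivAt f (f' t) t) (hf' : f' =O[atTop] fun _ => (1 : ℝ)) :
    ∃ a, UniformContinuousOn f (Set.Ici a) := by
  obtain ⟨C, hC⟩ := hf'.bound
  obtain ⟨a, ha⟩ := eventually_atTop.1 (hC.and (eventually_gt_atTop t₀))
  refine ⟨a, LipschitzOnWith.uniformContinuousOn (K := C.toNNReal) ?_⟩
  refine (convex_Ici a).lipschitzOnWith_of_nnnorm_hasDerivWithin_le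
    (fun t ht => (hf t (ha t ht).2).hasDerivWithinAt) fun t ht => ?_
  rw [← NNReal.coe_le_coe, coe_nnnorm]
  exact ((ha t ht).1.trans_eq (by simp)).trans (Real.le_coe_toNNReal C)

lemma tendsto_intervalIntegral_self_add [NormedSpace ℝ E] {g : ℝ → E}
    (hg : IntegrableAtFilter g atTop) {η : ℝ} (hη : 0 ≤ η) :
    Tendsto (fun t => ∫ r in t..(t + η), g r) atTop (𝓝 0) := by
  obtain ⟨b, hb⟩ := integrableAtFilter_atTop_iff.1 hg
  have hb_intervals {t : ℝ} (ht : b ≤ t) : IntervalIntegrable g volume b t :=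
    (hb.mono_set (Set.ordConnected_Ici.uIcc_subset Set.self_mem_Ici ht)).intervalIntegrable
  have hb_Ioi := hb.mono_set Set.Ioi_subset_Ici_self
  have h_sub := (intervalIntegral_tendsto_integral_Ioi b hb_Ioi
    (tendsto_atTop_add_const_right atTop η tendsto_id)).sub
    (intervalIntegral_tendsto_integral_Ioi b hb_Ioi tendsto_id)
  rw [sub_self] at h_sub
  refine h_sub.congr' ?_
  filter_upwards [eventually_ge_atTop b] with t ht
  exact intervalIntegral.integral_interval_sub_left
    (hb_intervals (ht.trans (le_add_of_nonneg_right hη))) (hb_intervals ht)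

/- Barbalat's lemma: if `‖f t‖ ≥ ε`, uniform continuity keeps `‖f‖ ≥ ε / 2` on `[t, t + η]` with
`η` independent of `t`, which for large `t` exceeds what is left of the integral. -/
lemma tendsto_zero_of_integrableAtFilter_norm_sq {f : ℝ → E} {a : ℝ}
    (hf : UniformContinuousOn f (Set.Ici a))
    (h_int : IntegrableAtFilter (fun t => ‖f t‖ ^ 2) atTop) : Tendsto f atTop (𝓝 0) := by
  rw [Metric.tendsto_atTop']
  intro ε hε
  obtain ⟨η, hη, h_close⟩ := Metric.uniformContinuousOn_iff_le.1 hf (ε / 2) (half_pos hε)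
  obtain ⟨T, hT⟩ := eventually_atTop.1
    (((tendsto_intervalIntegral_self_add h_int hη.le).eventually_lt_const
      (show 0 < η * (ε / 2) ^ 2 by positivity)).and (eventually_ge_atTop a))
  refine ⟨T, fun t ht => ?_⟩
  obtain ⟨h_small, hat⟩ := hT t ht.le
  rw [dist_zero_right]
  by_contra! h_large
  have h_half : ∀ r ∈ Set.Icc t (t + η), (ε / 2) ^ 2 ≤ ‖f r‖ ^ 2 := by
    intro r hr
    have h_dist := h_close t hat r (hat.trans hr.1) (by
      rw [Real.dist_eq, abs_sub_comm, abs_of_nonneg (by linarith [hr.1])]; linarith [hr.2])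
    rw [dist_eq_norm] at h_dist
    have h_ge : ε / 2 ≤ ‖f r‖ := by linarith [norm_sub_norm_le (f t) (f r)]
    gcongr
  have htη : t ≤ t + η := le_add_of_nonneg_right hη.le
  have h_cont : ContinuousOn (fun r => ‖f r‖ ^ 2) (Set.uIcc t (t + η)) := by
    rw [Set.uIcc_of_le htη]
    exact (hf.continuousOn.mono fun r hr => hat.trans hr.1).norm.pow 2
  have h_lower := intervalIntegral.integral_mono_on (μ := volume) htη intervalIntegrable_const
    h_cont.intervalIntegrable h_half
  rw [intervalIntegral.integral_const, add_sub_cancel_left, smul_eq_mul] at h_lower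
  linarith

lemma le_max_of_mul_deriv_add_mul_le {y y' b : ℝ → ℝ} {a ε M t : ℝ} (hε : 0 < ε)
    (hy : ∀ s, a ≤ s → HasDerivAt y (y' s) s) (hb : ∀ s, a ≤ s → 0 ≤ b s)
    (hM : ∀ s, a ≤ s → b s * y' s + ε * y s ≤ M) (ht : a ≤ t) : y t ≤ max (y a) (M / ε) := by
  refine le_of_forall_gt_imp_ge_of_dense fun Y hY => ?_
  obtain ⟨h_start, h_level⟩ := max_lt_iff.1 hY
  refine image_le_of_deriv_right_lt_deriv_boundary (B := fun _ => Y) (B' := fun _ => 0)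
    (fun s hs => (hy s hs.1).continuousAt.continuousWithinAt)
    (fun s hs => (hy s hs.1).hasDerivWithinAt) h_start.le (fun s => hasDerivAt_const s Y)
    (fun s hs h_eq => ?_) (Set.right_mem_Icc.2 ht)
  rw [div_lt_iff₀ hε, ← h_eq] at h_level
  by_contra! h_nonneg
  linarith [mul_nonneg (hb s hs.1) h_nonneg, hM s hs.1]

end HalfLine

section Coefficients

/-- A nonnegative, nonincreasing, twice differentiable function on `(t₀, ∞)` with nonnegative second
derivative. Differentiability is two-sided, hence the open ray. -/
structure NonnegAntitoneConvexFrom (t₀ : ℝ) (f : ℝ → ℝ) : Prop where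
  differentiableAt : ∀ t, t₀ < t → DifferentiableAt ℝ f t
  differentiableAt_deriv : ∀ t, t₀ < t → DifferentiableAt ℝ (deriv f) t
  nonneg : ∀ t, t₀ < t → 0 ≤ f t
  deriv_nonpos : ∀ t, t₀ < t → deriv f t ≤ 0
  deriv_deriv_nonneg : ∀ t, t₀ < t → 0 ≤ deriv (deriv f) t

/-- A positive, nondecreasing, twice differentiable function on `(t₀, ∞)` with nonpositive second
derivative. -/
structure PosMonotoneConcaveFrom (t₀ : ℝ) (f : ℝ → ℝ) : Prop where
  differentiableAt : ∀ t, t₀ < t → DifferentiableAt ℝ f t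
  differentiableAt_deriv : ∀ t, t₀ < t → DifferentiableAt ℝ (deriv f) t
  pos : ∀ t, t₀ < t → 0 < f t
  deriv_nonneg : ∀ t, t₀ < t → 0 ≤ deriv f t
  deriv_deriv_nonpos : ∀ t, t₀ < t → deriv (deriv f) t ≤ 0

/-- A nonnegative, differentiable function on `(t₀, ∞)` with nonnegative derivative. -/
structure NonnegMonotoneFrom (t₀ : ℝ) (f : ℝ → ℝ) : Prop where
  differentiableAt : ∀ t, t₀ < t → DifferentiableAt ℝ f t
  nonneg : ∀ t, t₀ < t → 0 ≤ f t
  deriv_nonneg : ∀ t, t₀ < t → 0 ≤ deriv f t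

variable {t₀ : ℝ} {f g : ℝ → ℝ}

namespace NonnegAntitoneConvexFrom

lemma of_forall_ge (h_pos : ∀ t, t₀ ≤ t → 0 < f t)
    (h_diff : ∀ t, t₀ ≤ t → DifferentiableAt ℝ f t ∧ DifferentiableAt ℝ (deriv f) t)
    (h_sign : ∀ t, t₀ ≤ t → deriv f t ≤ 0 ∧ 0 ≤ deriv (deriv f) t) :
    NonnegAntitoneConvexFrom t₀ f where
  differentiableAt t ht := (h_diff t ht.le).1
  differentiableAt_deriv t ht := (h_diff t ht.le).2
  nonneg t ht := (h_pos t ht.le).le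
  deriv_nonpos t ht := (h_sign t ht.le).1
  deriv_deriv_nonneg t ht := (h_sign t ht.le).2

lemma of_hasDerivAt {f' f'' : ℝ → ℝ} (hf : ∀ t, t₀ < t → HasDerivAt f (f' t) t)
    (hf' : ∀ t, t₀ < t → HasDerivAt f' (f'' t) t) (h_nonneg : ∀ t, t₀ < t → 0 ≤ f t)
    (hf'_nonpos : ∀ t, t₀ < t → f' t ≤ 0) (hf''_nonneg : ∀ t, t₀ < t → 0 ≤ f'' t) :
    NonnegAntitoneConvexFrom t₀ f := by
  have h_deriv (t : ℝ) (ht : t₀ < t) : HasDerivAt (deriv f) (f'' t) t := by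
    refine (hf' t ht).congr_of_eventuallyEq ?_
    filter_upwards [Ioi_mem_nhds ht] with s hs using (hf s hs).deriv
  exact
    { differentiableAt := fun t ht => (hf t ht).differentiableAt
      differentiableAt_deriv := fun t ht => (h_deriv t ht).differentiableAt
      nonneg := h_nonneg
      deriv_nonpos := fun t ht => (hf t ht).deriv.trans_le (hf'_nonpos t ht)
      deriv_deriv_nonneg := fun t ht => (hf''_nonneg t ht).trans_eq (h_deriv t ht).deriv.symm }

lemma mul (hf : NonnegAntitoneConvexFrom t₀ f) (hg : NonnegAntitoneConvexFrom t₀ g) :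
    NonnegAntitoneConvexFrom t₀ fun t => f t * g t := by
  have hf₁ (t : ℝ) (ht : t₀ < t) := (hf.differentiableAt t ht).hasDerivAt
  have hg₁ (t : ℝ) (ht : t₀ < t) := (hg.differentiableAt t ht).hasDerivAt
  have hf₂ (t : ℝ) (ht : t₀ < t) := (hf.differentiableAt_deriv t ht).hasDerivAt
  have hg₂ (t : ℝ) (ht : t₀ < t) := (hg.differentiableAt_deriv t ht).hasDerivAt
  refine of_hasDerivAt (fun t ht => (hf₁ t ht).mul (hg₁ t ht))
    (fun t ht => ((hf₂ t ht).mul (hg₁ t ht)).add ((hf₁ t ht).mul (hg₂ t ht)))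
    (fun t ht => mul_nonneg (hf.nonneg t ht) (hg.nonneg t ht)) (fun t ht => ?_) fun t ht => ?_
  · exact add_nonpos (mul_nonpos_of_nonpos_of_nonneg (hf.deriv_nonpos t ht) (hg.nonneg t ht))
      (mul_nonpos_of_nonneg_of_nonpos (hf.nonneg t ht) (hg.deriv_nonpos t ht))
  · have h_cross := mul_nonneg_of_nonpos_of_nonpos (hf.deriv_nonpos t ht) (hg.deriv_nonpos t ht)
    exact add_nonneg
      (add_nonneg (mul_nonneg (hf.deriv_deriv_nonneg t ht) (hg.nonneg t ht)) h_cross)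
      (add_nonneg h_cross (mul_nonneg (hf.nonneg t ht) (hg.deriv_deriv_nonneg t ht)))

lemma continuousOn (hf : NonnegAntitoneConvexFrom t₀ f) : ContinuousOn f (Set.Ioi t₀) :=
  fun t ht => (hf.differentiableAt t ht).continuousAt.continuousWithinAt

lemma isBigO_one (hf : NonnegAntitoneConvexFrom t₀ f) : f =O[atTop] fun _ => (1 : ℝ) := by
  refine Asymptotics.isBigO_iff.2 ⟨f (t₀ + 1), ?_⟩
  filter_upwards [eventually_ge_atTop (t₀ + 1)] with t ht
  have h_anti : AntitoneOn f (Set.Ioi t₀) :=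
    antitoneOn_of_deriv_nonpos (convex_Ioi t₀) hf.continuousOn
      (fun s hs => (hf.differentiableAt s (interior_subset hs)).differentiableWithinAt)
      fun s hs => hf.deriv_nonpos s (interior_subset hs)
  have ht₀ : t₀ < t := (lt_add_one t₀).trans_le ht
  rw [Real.norm_of_nonneg (hf.nonneg t ht₀), norm_one, mul_one]
  exact h_anti (Set.mem_Ioi.2 (lt_add_one t₀)) ht₀ ht

end NonnegAntitoneConvexFrom

namespace PosMonotoneConcaveFrom

lemma of_forall_ge (h_pos : ∀ t, t₀ ≤ t → 0 < f t)
    (h_diff : ∀ t, t₀ ≤ t → DifferentiableAt ℝ f t ∧ DifferentiableAt ℝ (deriv f) t)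
    (h_sign : ∀ t, t₀ ≤ t → 0 ≤ deriv f t ∧ deriv (deriv f) t ≤ 0) :
    PosMonotoneConcaveFrom t₀ f where
  differentiableAt t ht := (h_diff t ht.le).1
  differentiableAt_deriv t ht := (h_diff t ht.le).2
  pos t ht := h_pos t ht.le
  deriv_nonneg t ht := (h_sign t ht.le).1
  deriv_deriv_nonpos t ht := (h_sign t ht.le).2

lemma continuousOn (hf : PosMonotoneConcaveFrom t₀ f) : ContinuousOn f (Set.Ioi t₀) :=
  fun t ht => (hf.differentiableAt t ht).continuousAt.continuousWithinAt

lemma inv (hf : PosMonotoneConcaveFrom t₀ f) : NonnegAntitoneConvexFrom t₀ fun t => (f t)⁻¹ := by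
  have hf₁ (t : ℝ) (ht : t₀ < t) := (hf.differentiableAt t ht).hasDerivAt
  have hf₂ (t : ℝ) (ht : t₀ < t) := (hf.differentiableAt_deriv t ht).hasDerivAt
  have h_ne (t : ℝ) (ht : t₀ < t) : f t ≠ 0 := (hf.pos t ht).ne'
  refine .of_hasDerivAt (fun t ht => (hf₁ t ht).fun_inv (h_ne t ht))
    (fun t ht => (hf₂ t ht).fun_neg.fun_div ((hf₁ t ht).fun_pow 2) (pow_ne_zero 2 (h_ne t ht)))
    (fun t ht => inv_nonneg.2 (hf.pos t ht).le) (fun t ht => ?_) fun t ht => ?_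
  · exact div_nonpos_of_nonpos_of_nonneg (neg_nonpos.2 (hf.deriv_nonneg t ht)) (sq_nonneg _)
  · have h_pos := hf.pos t ht
    have h_curv := mul_nonneg (neg_nonneg.2 (hf.deriv_deriv_nonpos t ht)) (sq_nonneg (f t))
    have h_slope : 0 ≤ 2 * f t * deriv f t ^ 2 := by positivity
    refine div_nonneg ?_ (by positivity)
    norm_num
    linarith

lemma const_sub (hf : PosMonotoneConcaveFrom t₀ f) {M : ℝ} (hM : ∀ t, t₀ < t → f t ≤ M) :
    NonnegAntitoneConvexFrom t₀ fun t => M - f t :=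
  .of_hasDerivAt (fun t ht => (hf.differentiableAt t ht).hasDerivAt.const_sub M)
    (fun t ht => (hf.differentiableAt_deriv t ht).hasDerivAt.fun_neg)
    (fun t ht => sub_nonneg.2 (hM t ht)) (fun t ht => neg_nonpos.2 (hf.deriv_nonneg t ht))
    fun t ht => neg_nonneg.2 (hf.deriv_deriv_nonpos t ht)

end PosMonotoneConcaveFrom

namespace NonnegMonotoneFrom

lemma of_forall_ge (h_nonneg : ∀ t, t₀ ≤ t → 0 ≤ f t)
    (h_deriv : ∀ t, t₀ ≤ t → DifferentiableAt ℝ f t ∧ 0 ≤ deriv f t) :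
    NonnegMonotoneFrom t₀ f where
  differentiableAt t ht := (h_deriv t ht.le).1
  nonneg t ht := h_nonneg t ht.le
  deriv_nonneg t ht := (h_deriv t ht.le).2

lemma continuousOn (hf : NonnegMonotoneFrom t₀ f) : ContinuousOn f (Set.Ioi t₀) :=
  fun t ht => (hf.differentiableAt t ht).continuousAt.continuousWithinAt

lemma mul (hf : NonnegMonotoneFrom t₀ f) (hg : NonnegMonotoneFrom t₀ g) :
    NonnegMonotoneFrom t₀ fun t => f t * g t where
  differentiableAt t ht := (hf.differentiableAt t ht).fun_mul (hg.differentiableAt t ht)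
  nonneg t ht := mul_nonneg (hf.nonneg t ht) (hg.nonneg t ht)
  deriv_nonneg t ht := by
    rw [deriv_fun_mul (hf.differentiableAt t ht) (hg.differentiableAt t ht)]
    exact add_nonneg (mul_nonneg (hf.deriv_nonneg t ht) (hg.nonneg t ht))
      (mul_nonneg (hf.nonneg t ht) (hg.deriv_nonneg t ht))

end NonnegMonotoneFrom

/-- The weight `C₀ = (2ω - D) / β₀` by which the cocoercivity surplus enters the estimates. -/
noncomputable def cocoercivityWeight (ω : ℝ) (β₀ D : ℝ → ℝ) (t : ℝ) : ℝ := (2 * ω - D t) / β₀ t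

/-- The coefficient `A₁` of the energy, as a function of `p = β₁ β₂` and `q = λ₁ λ₂`. -/
noncomputable def crossWeight (ω : ℝ) (β₀ D p q : ℝ → ℝ) (t : ℝ) : ℝ :=
  cocoercivityWeight ω β₀ D t * p t - β₀ t / D t * q t - 3

section CrossWeight

variable {ω t : ℝ} {β₀ D p q : ℝ → ℝ}

lemma hasDerivAt_crossWeight (hβ₀ : DifferentiableAt ℝ β₀ t) (hD : DifferentiableAt ℝ D t)
    (hp : DifferentiableAt ℝ p t) (hq : DifferentiableAt ℝ q t) (hβ₀_ne : β₀ t ≠ 0)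
    (hD_ne : D t ≠ 0) :
    HasDerivAt (crossWeight ω β₀ D p q)
      (-(deriv D t * (D t ^ 2 * p t - β₀ t ^ 2 * q t) / (β₀ t * D t ^ 2)
        + (2 * ω - D t) * (-deriv p t) / β₀ t + (2 * ω - D t) * p t * deriv β₀ t / β₀ t ^ 2
        + deriv β₀ t * q t / D t + β₀ t * deriv q t / D t)) t := by
  have h_left := ((hD.hasDerivAt.const_sub (2 * ω)).fun_div hβ₀.hasDerivAt hβ₀_ne).fun_mul
    hp.hasDerivAt
  have h_right := (hβ₀.hasDerivAt.fun_div hD.hasDerivAt hD_ne).fun_mul hq.hasDerivAt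
  refine ((h_left.fun_sub h_right).sub_const 3).congr_deriv ?_
  field_simp
  ring

lemma deriv_crossWeight_nonpos (hβ₀ : PosMonotoneConcaveFrom t₀ β₀)
    (hD : PosMonotoneConcaveFrom t₀ D) (hp : NonnegAntitoneConvexFrom t₀ p)
    (hq : NonnegMonotoneFrom t₀ q) (hDω : D t ≤ 2 * ω)
    (h_low : β₀ t ^ 2 * q t ≤ D t ^ 2 * p t) (ht : t₀ < t) :
    deriv (crossWeight ω β₀ D p q) t ≤ 0 := by
  have hβ₀_pos := hβ₀.pos t ht
  have hD_pos := hD.pos t ht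
  rw [(hasDerivAt_crossWeight (hβ₀.differentiableAt t ht) (hD.differentiableAt t ht)
    (hp.differentiableAt t ht) (hq.differentiableAt t ht) hβ₀_pos.ne' hD_pos.ne').deriv, neg_nonpos]
  have := hp.nonneg t ht
  have := hq.nonneg t ht
  have := hβ₀.deriv_nonneg t ht
  have := hD.deriv_nonneg t ht
  have := hq.deriv_nonneg t ht
  have : 0 ≤ -deriv p t := neg_nonneg.2 (hp.deriv_nonpos t ht)
  have : 0 ≤ 2 * ω - D t := sub_nonneg.2 hDω
  have : 0 ≤ D t ^ 2 * p t - β₀ t ^ 2 * q t := sub_nonneg.2 h_low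
  positivity

end CrossWeight

end Coefficients

lemma exists_pos_mul_sq_add_sq_add_sq_le {c₁ δ₃ δ₄ δ₅ : ℝ} (hc₁ : 0 < c₁) (hδ₃ : 0 < δ₃)
    (h_gap : 1 / c₁ < δ₅ - δ₄ ^ 2 / δ₃) :
    ∃ ε > 0, ∀ a b d : ℝ, ε * (a ^ 2 + b ^ 2 + d ^ 2) ≤
      c₁ * a ^ 2 - 2 * a * d - 2 * δ₄ * b * d + δ₃ * b ^ 2 + δ₅ * d ^ 2 := by
  have h_cont : ContinuousAt (fun ε : ℝ => 1 / (c₁ - ε) + δ₄ ^ 2 / (δ₃ - ε) + ε) 0 := by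
    have hc₁_ne : c₁ - 0 ≠ 0 := by simpa using hc₁.ne'
    have hδ₃_ne : δ₃ - 0 ≠ 0 := by simpa using hδ₃.ne'
    fun_prop (disch := assumption)
  have h_room : ∀ᶠ ε in 𝓝[>] (0 : ℝ), 1 / (c₁ - ε) + δ₄ ^ 2 / (δ₃ - ε) + ε < δ₅ := by
    apply (h_cont.tendsto.mono_left nhdsWithin_le_nhds).eventually_lt_const
    simp only [sub_zero, add_zero]
    linarith
  obtain ⟨ε, h_room, hε, hε_min⟩ := (h_room.and (Ioo_mem_nhdsGT (lt_min hc₁ hδ₃))).exists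
  have hεc₁ : 0 < c₁ - ε := sub_pos.2 (hε_min.trans_le (min_le_left _ _))
  have hεδ₃ : 0 < δ₃ - ε := sub_pos.2 (hε_min.trans_le (min_le_right _ _))
  refine ⟨ε, hε, fun a b d => ?_⟩
  rw [← sub_nonneg]
  calc 0 ≤ (c₁ - ε) * (a - d / (c₁ - ε)) ^ 2 + (δ₃ - ε) * (b - δ₄ * d / (δ₃ - ε)) ^ 2
        + (δ₅ - (1 / (c₁ - ε) + δ₄ ^ 2 / (δ₃ - ε) + ε)) * d ^ 2 := by
        have := sub_pos.2 h_room
        positivity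
    _ = c₁ * a ^ 2 - 2 * a * d - 2 * δ₄ * b * d + δ₃ * b ^ 2 + δ₅ * d ^ 2
        - ε * (a ^ 2 + b ^ 2 + d ^ 2) := by
        field_simp
        ring

lemma exists_pos_coercive_of_bounds {t₀ c₁ δ₃ δ₄ δ₅ : ℝ} {β₁ a₂ a₁ e : ℝ → ℝ} (hc₁ : 0 < c₁)
    (hδ₃ : 0 < δ₃) (h_gap : 1 / c₁ < δ₅ - δ₄ ^ 2 / δ₃) (hβ₁ : ∀ t, t₀ ≤ t → c₁ ≤ β₁ t)
    (ha₂ : ∀ t, t₀ ≤ t → a₂ t ≤ δ₄) (ha₁ : ∀ t, t₀ ≤ t → δ₃ ≤ a₁ t + 2)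
    (he : ∀ t, t₀ ≤ t → δ₅ ≤ e t) :
    ∃ ε > 0, ∀ t, t₀ < t → ∀ a b d : ℝ, 0 ≤ b → 0 ≤ d →
      ε * (a ^ 2 + b ^ 2 + d ^ 2) ≤
        β₁ t * a ^ 2 - 2 * a * d - 2 * a₂ t * b * d + (a₁ t + 2) * b ^ 2 + e t * d ^ 2 := by
  obtain ⟨ε, hε, h_quad⟩ := exists_pos_mul_sq_add_sq_add_sq_le hc₁ hδ₃ h_gap
  refine ⟨ε, hε, fun t ht a b d hb hd => (h_quad a b d).trans ?_⟩
  gcongr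
  exacts [hβ₁ t ht.le, ha₂ t ht.le, ha₁ t ht.le, he t ht.le]

lemma pos_of_isGLB_image_Ici {t₀ δ₁ δ₄ c₁ : ℝ} {β c r : ℝ → ℝ} (hδ₁ : 0 < δ₁) (hδ₄ : 0 < δ₄)
    (hc₁ : IsGLB (β '' Set.Ici t₀) c₁) (hβ : ∀ t, t₀ ≤ t → 0 ≤ β t) (hr : ∀ t, t₀ ≤ t → 0 ≤ r t)
    (h_lower : ∀ t, t₀ ≤ t → δ₁ ≤ c t * β t ^ 2 - r t)
    (h_upper : ∀ t, t₀ ≤ t → c t * β t ≤ δ₄) : 0 < c₁ := by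
  refine (div_pos hδ₁ hδ₄).trans_le ((le_isGLB_iff hc₁).2 ?_)
  rintro _ ⟨t, ht, rfl⟩
  rw [div_le_iff₀' hδ₄]
  linarith [mul_le_mul_of_nonneg_right (h_upper t ht) (hβ t ht), h_lower t ht, hr t ht]

section Dissipation

variable {H : Type*} [NormedAddCommGroup H] [InnerProductSpace ℝ H]

/-- The derivative of the energy `lyapunov` below along a curve with position `X` and successive
derivatives `v`, `w`, `z`, when the coefficients `b₁, b₂, a₂, a₁, e` are held constant. -/
def lyapunovRate (b₁ b₂ a₂ a₁ e : ℝ) (X v w z : H) : ℝ :=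
  2 * ⟪z, X⟫_ℝ + 6 * ⟪v, w⟫_ℝ + b₂ * (2 * ⟪w, X⟫_ℝ + 2 * ‖v‖ ^ 2) + b₁ * (2 * ⟪v, X⟫_ℝ)
    + a₂ * (2 * ⟪z, v⟫_ℝ + 2 * ‖w‖ ^ 2) + a₁ * (2 * ⟪v, w⟫_ℝ) + e * (2 * ⟪z, w⟫_ℝ)

lemma lyapunovRate_eq_norm_sq_sub (b₁ b₂ c m l₁ l₂ : ℝ) (X v w z : H) :
    lyapunovRate b₁ b₂ (c * b₁) (c * (b₁ * b₂) - m * (l₁ * l₂) - 3) (c * b₂) X v w z =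
      c * ‖z + b₂ • w + b₁ • v‖ ^ 2 + 2 * ⟪z + b₂ • w + b₁ • v, X⟫_ℝ
        - m * ‖l₁ • v + l₂ • w‖ ^ 2
        - ((c * b₁ ^ 2 - m * l₁ ^ 2 - 2 * b₂) * ‖v‖ ^ 2
          + (c * (b₂ ^ 2 - 2 * b₁) - m * l₂ ^ 2) * ‖w‖ ^ 2 + c * ‖z‖ ^ 2) := by
  simp only [lyapunovRate, norm_add_sq_real, norm_smul, mul_pow, Real.norm_eq_abs, sq_abs,
    inner_add_left, real_inner_smul_left, real_inner_smul_right, real_inner_comm v w]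
  ring

lemma two_mul_inner_le_mul_sq_add_div_mul_sq {d : ℝ} (hd : 0 < d) (u s : H) :
    2 * ⟪u, s⟫_ℝ ≤ d * ‖u‖ ^ 2 + 1 / d * ‖s‖ ^ 2 := by
  have h_sq : 0 ≤ 1 / d * ‖d • u - s‖ ^ 2 := by positivity
  rw [norm_sub_sq_real, norm_smul, real_inner_smul_left, Real.norm_of_nonneg hd.le] at h_sq
  have h_expand : 1 / d * ((d * ‖u‖) ^ 2 - 2 * (d * ⟪u, s⟫_ℝ) + ‖s‖ ^ 2) =
      d * ‖u‖ ^ 2 + 1 / d * ‖s‖ ^ 2 - 2 * ⟪u, s⟫_ℝ := by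
    field_simp
    ring
  linarith

lemma lyapunovRate_le_of_cocoercive {ω b₀ b₁ b₂ d l₁ l₂ : ℝ} {X v w z u : H} (hb₀ : 0 < b₀)
    (hd : 0 < d) (h_ode : z + b₂ • w + b₁ • v + b₀ • u = 0)
    (h_coc : ω * ‖u‖ ^ 2 ≤ ⟪u, X + l₁ • v + l₂ • w⟫_ℝ) :
    lyapunovRate b₁ b₂ ((2 * ω - d) / b₀ * b₁)
        ((2 * ω - d) / b₀ * (b₁ * b₂) - b₀ / d * (l₁ * l₂) - 3) ((2 * ω - d) / b₀ * b₂) X v w z ≤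
      -(((2 * ω - d) / b₀ * b₁ ^ 2 - b₀ / d * l₁ ^ 2 - 2 * b₂) * ‖v‖ ^ 2
        + ((2 * ω - d) / b₀ * (b₂ ^ 2 - 2 * b₁) - b₀ / d * l₂ ^ 2) * ‖w‖ ^ 2
        + (2 * ω - d) / b₀ * ‖z‖ ^ 2) := by
  set s := l₁ • v + l₂ • w
  have h_surplus : (2 * ω - d) * ‖u‖ ^ 2 - 2 * ⟪u, X⟫_ℝ - 1 / d * ‖s‖ ^ 2 ≤ 0 := by
    rw [add_assoc, inner_add_right] at h_coc
    linarith [two_mul_inner_le_mul_sq_add_div_mul_sq hd u s]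
  have h_force : (2 * ω - d) / b₀ * ‖-(b₀ • u)‖ ^ 2 + 2 * ⟪-(b₀ • u), X⟫_ℝ - b₀ / d * ‖s‖ ^ 2 =
      b₀ * ((2 * ω - d) * ‖u‖ ^ 2 - 2 * ⟪u, X⟫_ℝ - 1 / d * ‖s‖ ^ 2) := by
    rw [norm_neg, norm_smul, Real.norm_of_nonneg hb₀.le, inner_neg_left, real_inner_smul_left]
    field_simp
    ring
  rw [lyapunovRate_eq_norm_sq_sub, eq_neg_of_add_eq_zero_left h_ode, h_force]
  linarith [mul_nonpos_of_nonneg_of_nonpos hb₀.le h_surplus]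

end Dissipation

lemma isBigO_one_of_norm_sq_le {ι E : Type*} [SeminormedAddCommGroup E] {l : Filter ι} {f : ι → E}
    {C : ℝ} (hf : ∀ᶠ i in l, ‖f i‖ ^ 2 ≤ C) : f =O[l] fun _ => (1 : ℝ) := by
  refine .of_bound √C (hf.mono fun i hi => ?_)
  rw [norm_one, mul_one]
  exact Real.le_sqrt_of_sq_le hi

section Lyapunov

variable {H : Type*} [NormedAddCommGroup H] [InnerProductSpace ℝ H]

/-- A curve `X` in `H` with successive derivatives `v`, `w` and continuous `z` on `(t₀, ∞)`. -/
structure IsC3CurveFrom (t₀ : ℝ) (X v w z : ℝ → H) : Prop where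
  hasDerivAt : ∀ t, t₀ < t → HasDerivAt X (v t) t
  hasDerivAt_vel : ∀ t, t₀ < t → HasDerivAt v (w t) t
  hasDerivAt_acc : ∀ t, t₀ < t → HasDerivAt w (z t) t
  continuousOn_jerk : ContinuousOn z (Set.Ioi t₀)

/-- The energy `y'' + β₂ y' + (β₁ - β₂') y + a₂ u' + (a₁ - a₂') u + e ‖w‖²` of a curve `X` with
derivatives `v`, `w`, where `y = ‖X‖²` and `u = ‖v‖²`. -/
noncomputable def lyapunov (β₁ β₂ a₂ a₁ e : ℝ → ℝ) (X v w : ℝ → H) (t : ℝ) : ℝ :=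
  2 * (⟪w t, X t⟫_ℝ + ‖v t‖ ^ 2) + β₂ t * (2 * ⟪v t, X t⟫_ℝ) + (β₁ t - deriv β₂ t) * ‖X t‖ ^ 2
    + a₂ t * (2 * ⟪v t, w t⟫_ℝ) + (a₁ t - deriv a₂ t) * ‖v t‖ ^ 2 + e t * ‖w t‖ ^ 2

/-- Coefficients for which `lyapunov` decreases at least at the rate `lyapunovRate` and controls
`y' = 2⟪v, X⟫`, `‖X‖`, `‖v‖`, `‖w‖`. -/
structure LyapunovWeights (t₀ : ℝ) (β₁ β₂ a₂ a₁ e : ℝ → ℝ) : Prop where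
  convex_β₂ : NonnegAntitoneConvexFrom t₀ β₂
  convex_a₂ : NonnegAntitoneConvexFrom t₀ a₂
  differentiableAt_β₁ : ∀ t, t₀ < t → DifferentiableAt ℝ β₁ t
  differentiableAt_a₁ : ∀ t, t₀ < t → DifferentiableAt ℝ a₁ t
  differentiableAt_e : ∀ t, t₀ < t → DifferentiableAt ℝ e t
  deriv_β₁_nonpos : ∀ t, t₀ < t → deriv β₁ t ≤ 0
  deriv_a₁_nonpos : ∀ t, t₀ < t → deriv a₁ t ≤ 0
  deriv_e_nonpos : ∀ t, t₀ < t → deriv e t ≤ 0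
  coercive : ∃ ε > 0, ∀ t, t₀ < t → ∀ a b d : ℝ, 0 ≤ b → 0 ≤ d →
    ε * (a ^ 2 + b ^ 2 + d ^ 2) ≤
      β₁ t * a ^ 2 - 2 * a * d - 2 * a₂ t * b * d + (a₁ t + 2) * b ^ 2 + e t * d ^ 2

variable {t₀ : ℝ} {β₁ β₂ a₂ a₁ e : ℝ → ℝ} {X v w z : ℝ → H}

namespace LyapunovWeights

lemma hasDerivAt_lyapunov (hW : LyapunovWeights t₀ β₁ β₂ a₂ a₁ e)
    (hX : IsC3CurveFrom t₀ X v w z) {t : ℝ} (ht : t₀ < t) :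
    HasDerivAt (lyapunov β₁ β₂ a₂ a₁ e X v w)
      (lyapunovRate (β₁ t) (β₂ t) (a₂ t) (a₁ t) (e t) (X t) (v t) (w t) (z t)
        + (deriv β₁ t - deriv (deriv β₂) t) * ‖X t‖ ^ 2
        + (deriv a₁ t - deriv (deriv a₂) t) * ‖v t‖ ^ 2 + deriv e t * ‖w t‖ ^ 2) t := by
  have hX₁ := hX.hasDerivAt t ht
  have hX₂ := hX.hasDerivAt_vel t ht
  have hX₃ := hX.hasDerivAt_acc t ht
  have hβ₁ := (hW.differentiableAt_β₁ t ht).hasDerivAt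
  have hβ₂ := (hW.convex_β₂.differentiableAt t ht).hasDerivAt
  have hβ₂' := (hW.convex_β₂.differentiableAt_deriv t ht).hasDerivAt
  have ha₁ := (hW.differentiableAt_a₁ t ht).hasDerivAt
  have ha₂ := (hW.convex_a₂.differentiableAt t ht).hasDerivAt
  have ha₂' := (hW.convex_a₂.differentiableAt_deriv t ht).hasDerivAt
  have he := (hW.differentiableAt_e t ht).hasDerivAt
  have h_sum := (((((((hX₃.inner ℝ hX₁).fun_add hX₂.norm_sq).const_mul 2).fun_add
    (hβ₂.fun_mul ((hX₂.inner ℝ hX₁).const_mul 2))).fun_add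
    ((hβ₁.fun_sub hβ₂').fun_mul hX₁.norm_sq)).fun_add
    (ha₂.fun_mul ((hX₂.inner ℝ hX₃).const_mul 2))).fun_add
    ((ha₁.fun_sub ha₂').fun_mul hX₂.norm_sq)).fun_add (he.fun_mul hX₃.norm_sq)
  refine h_sum.congr_deriv ?_
  simp only [lyapunovRate, real_inner_self_eq_norm_sq, real_inner_comm (v t) (w t),
    real_inner_comm (v t) (X t), real_inner_comm (w t) (z t), real_inner_comm (v t) (z t)]
  ring

lemma deriv_lyapunov_le (hW : LyapunovWeights t₀ β₁ β₂ a₂ a₁ e) (hX : IsC3CurveFrom t₀ X v w z)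
    {t : ℝ} (ht : t₀ < t) :
    deriv (lyapunov β₁ β₂ a₂ a₁ e X v w) t ≤
      lyapunovRate (β₁ t) (β₂ t) (a₂ t) (a₁ t) (e t) (X t) (v t) (w t) (z t) := by
  rw [(hW.hasDerivAt_lyapunov hX ht).deriv]
  have hX_coeff : deriv β₁ t - deriv (deriv β₂) t ≤ 0 := by
    linarith [hW.deriv_β₁_nonpos t ht, hW.convex_β₂.deriv_deriv_nonneg t ht]
  have hv_coeff : deriv a₁ t - deriv (deriv a₂) t ≤ 0 := by
    linarith [hW.deriv_a₁_nonpos t ht, hW.convex_a₂.deriv_deriv_nonneg t ht]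
  linarith [mul_nonpos_of_nonpos_of_nonneg hX_coeff (sq_nonneg ‖X t‖),
    mul_nonpos_of_nonpos_of_nonneg hv_coeff (sq_nonneg ‖v t‖),
    mul_nonpos_of_nonpos_of_nonneg (hW.deriv_e_nonpos t ht) (sq_nonneg ‖w t‖)]

lemma exists_pos_add_le_lyapunov (hW : LyapunovWeights t₀ β₁ β₂ a₂ a₁ e) (X v w : ℝ → H) :
    ∃ ε > 0, ∀ t, t₀ < t →
      β₂ t * (2 * ⟪v t, X t⟫_ℝ) + ε * (‖X t‖ ^ 2 + ‖v t‖ ^ 2 + ‖w t‖ ^ 2) ≤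
        lyapunov β₁ β₂ a₂ a₁ e X v w t := by
  obtain ⟨ε, hε, h_coercive⟩ := hW.coercive
  refine ⟨ε, hε, fun t ht => ?_⟩
  have h_quad := h_coercive t ht ‖X t‖ ‖v t‖ ‖w t‖ (norm_nonneg _) (norm_nonneg _)
  have h_wX := (abs_le.1 (abs_real_inner_le_norm (w t) (X t))).1
  have h_vw := mul_le_mul_of_nonneg_left (abs_le.1 (abs_real_inner_le_norm (v t) (w t))).1
    (hW.convex_a₂.nonneg t ht)
  have h_β₂' := mul_nonpos_of_nonpos_of_nonneg (hW.convex_β₂.deriv_nonpos t ht)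
    (sq_nonneg ‖X t‖)
  have h_a₂' := mul_nonpos_of_nonpos_of_nonneg (hW.convex_a₂.deriv_nonpos t ht)
    (sq_nonneg ‖v t‖)
  rw [lyapunov]
  linarith

lemma antitoneOn_lyapunov (hW : LyapunovWeights t₀ β₁ β₂ a₂ a₁ e) (hX : IsC3CurveFrom t₀ X v w z)
    (h_rate : ∀ t, t₀ < t →
      lyapunovRate (β₁ t) (β₂ t) (a₂ t) (a₁ t) (e t) (X t) (v t) (w t) (z t) ≤ 0) :
    AntitoneOn (lyapunov β₁ β₂ a₂ a₁ e X v w) (Set.Ioi t₀) :=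
  antitoneOn_of_deriv_nonpos (convex_Ioi t₀)
    (fun _ ht => (hW.hasDerivAt_lyapunov hX ht).continuousAt.continuousWithinAt)
    (fun _ ht =>
      (hW.hasDerivAt_lyapunov hX (interior_subset ht)).differentiableAt.differentiableWithinAt)
    fun t ht =>
      (hW.deriv_lyapunov_le hX (interior_subset ht)).trans (h_rate t (interior_subset ht))

/- Dropping `‖v‖²` and `‖w‖²`, the lower bound on the energy is the differential inequality
`β₂ y' + ε y ≤ M` for `y = ‖X‖²`. -/
lemma isBigO_position (hW : LyapunovWeights t₀ β₁ β₂ a₂ a₁ e) (hX : IsC3CurveFrom t₀ X v w z)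
    (h_rate : ∀ t, t₀ < t →
      lyapunovRate (β₁ t) (β₂ t) (a₂ t) (a₁ t) (e t) (X t) (v t) (w t) (z t) ≤ 0) :
    X =O[atTop] fun _ => (1 : ℝ) := by
  obtain ⟨ε, hε, h_lower⟩ := hW.exists_pos_add_le_lyapunov X v w
  have ha : t₀ < t₀ + 1 := lt_add_one t₀
  set M := lyapunov β₁ β₂ a₂ a₁ e X v w (t₀ + 1)
  have h_diff_ineq (t : ℝ) (ht : t₀ + 1 ≤ t) :
      β₂ t * (2 * ⟪X t, v t⟫_ℝ) + ε * ‖X t‖ ^ 2 ≤ M := by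
    have ht₀ := ha.trans_le ht
    have h_le := (h_lower t ht₀).trans (hW.antitoneOn_lyapunov hX h_rate ha ht₀ ht)
    rw [real_inner_comm]
    linarith [mul_nonneg hε.le (sq_nonneg ‖v t‖), mul_nonneg hε.le (sq_nonneg ‖w t‖)]
  refine isBigO_one_of_norm_sq_le (C := max (‖X (t₀ + 1)‖ ^ 2) (M / ε)) ?_
  filter_upwards [eventually_ge_atTop (t₀ + 1)] with t ht
  exact le_max_of_mul_deriv_add_mul_le hε
    (fun s hs => (hX.hasDerivAt s (ha.trans_le hs)).norm_sq)
    (fun s hs => hW.convex_β₂.nonneg s (ha.trans_le hs)) h_diff_ineq ht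

lemma exists_pos_mul_le_lyapunov_add (hW : LyapunovWeights t₀ β₁ β₂ a₂ a₁ e) (v w : ℝ → H)
    (hX : X =O[atTop] fun _ => (1 : ℝ)) :
    ∃ ε > 0, ∃ B, ∀ᶠ t in atTop,
      ε * (‖v t‖ ^ 2 + ‖w t‖ ^ 2) ≤ lyapunov β₁ β₂ a₂ a₁ e X v w t + B := by
  obtain ⟨ε, hε, h_lower⟩ := hW.exists_pos_add_le_lyapunov X v w
  have h_smul : (fun t => β₂ t • X t) =O[atTop] fun _ => (1 : ℝ) := by
    simpa using hW.convex_β₂.isBigO_one.smul hX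
  obtain ⟨C, hC⟩ := h_smul.bound
  refine ⟨ε / 2, half_pos hε, 1 / (ε / 2) * C ^ 2, ?_⟩
  filter_upwards [hC, eventually_gt_atTop t₀] with t hCt ht
  rw [norm_one, mul_one] at hCt
  have h_young := two_mul_inner_le_mul_sq_add_div_mul_sq (half_pos hε) (v t) (-(β₂ t • X t))
  rw [inner_neg_right, real_inner_smul_right, norm_neg] at h_young
  have h_sq : 1 / (ε / 2) * ‖β₂ t • X t‖ ^ 2 ≤ 1 / (ε / 2) * C ^ 2 := by gcongr
  linarith [h_lower t ht, mul_nonneg hε.le (sq_nonneg ‖X t‖), mul_nonneg hε.le (sq_nonneg ‖w t‖)]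

lemma isBigO_velocity_and_acceleration (hW : LyapunovWeights t₀ β₁ β₂ a₂ a₁ e)
    (hX : IsC3CurveFrom t₀ X v w z)
    (h_rate : ∀ t, t₀ < t →
      lyapunovRate (β₁ t) (β₂ t) (a₂ t) (a₁ t) (e t) (X t) (v t) (w t) (z t) ≤ 0) :
    v =O[atTop] (fun _ => (1 : ℝ)) ∧ w =O[atTop] fun _ => (1 : ℝ) := by
  obtain ⟨ε, hε, B, h_lower⟩ := hW.exists_pos_mul_le_lyapunov_add v w (hW.isBigO_position hX h_rate)
  have h_sum : ∀ᶠ t in atTop, ‖v t‖ ^ 2 + ‖w t‖ ^ 2 ≤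
      (lyapunov β₁ β₂ a₂ a₁ e X v w (t₀ + 1) + B) / ε := by
    filter_upwards [h_lower, eventually_ge_atTop (t₀ + 1)] with t h_lower_t ht
    have h_anti := hW.antitoneOn_lyapunov hX h_rate (lt_add_one t₀) ((lt_add_one t₀).trans_le ht) ht
    rw [le_div_iff₀' hε]
    linarith
  exact ⟨isBigO_one_of_norm_sq_le (h_sum.mono fun t ht => by linarith [sq_nonneg ‖w t‖]),
    isBigO_one_of_norm_sq_le (h_sum.mono fun t ht => by linarith [sq_nonneg ‖v t‖])⟩

lemma integrableAtFilter_norm_sq (hW : LyapunovWeights t₀ β₁ β₂ a₂ a₁ e)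
    (hX : IsC3CurveFrom t₀ X v w z) {δ : ℝ} (hδ : 0 < δ)
    (h_rate : ∀ t, t₀ < t →
      lyapunovRate (β₁ t) (β₂ t) (a₂ t) (a₁ t) (e t) (X t) (v t) (w t) (z t) ≤
        -(δ * (‖v t‖ ^ 2 + ‖w t‖ ^ 2 + ‖z t‖ ^ 2))) :
    IntegrableAtFilter (fun t => ‖v t‖ ^ 2 + ‖w t‖ ^ 2 + ‖z t‖ ^ 2) atTop := by
  have h_rate_nonpos (t : ℝ) (ht : t₀ < t) := (h_rate t ht).trans (neg_nonpos.2 (by positivity))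
  obtain ⟨ε, hε, B, h_lower⟩ :=
    hW.exists_pos_mul_le_lyapunov_add v w (hW.isBigO_position hX h_rate_nonpos)
  have hv : ContinuousOn v (Set.Ioi t₀) := fun t ht =>
    (hX.hasDerivAt_vel t ht).continuousAt.continuousWithinAt
  have hw : ContinuousOn w (Set.Ioi t₀) := fun t ht =>
    (hX.hasDerivAt_acc t ht).continuousAt.continuousWithinAt
  have h_int := integrableAtFilter_atTop_of_hasDerivAt_le_neg (B := -B)
    (fun t ht => (hW.hasDerivAt_lyapunov hX ht).differentiableAt.hasDerivAt)
    (fun t ht => (hW.deriv_lyapunov_le hX ht).trans (h_rate t ht))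
    (h_lower.mono fun t ht => by
      linarith [mul_nonneg hε.le (add_nonneg (sq_nonneg ‖v t‖) (sq_nonneg ‖w t‖))])
    ((((hv.norm.pow 2).add (hw.norm.pow 2)).add (hX.continuousOn_jerk.norm.pow 2)).const_mul δ)
    fun t _ => by positivity
  obtain ⟨s, hs, h_int⟩ := h_int
  exact ⟨s, hs, (integrable_const_mul_iff hδ.ne'.isUnit _).1 h_int⟩

end LyapunovWeights

end Lyapunov

section Admissible

/-- The conditions on the coefficients of the system, for a cocoercivity constant `ω` and an
auxiliary function `D`: the `dissipative` fields bound `A₀`, `B₀`, `C₀` from below, and `coercive`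
says that the quadratic form in `‖x - x*‖`, `‖x'‖`, `‖x''‖` minorizing the energy is uniformly
positive. -/
structure AdmissibleCoefficients (ω t₀ : ℝ) (β₀ β₁ β₂ l₁ l₂ D : ℝ → ℝ) : Prop where
  concave_β₀ : PosMonotoneConcaveFrom t₀ β₀
  convex_β₁ : NonnegAntitoneConvexFrom t₀ β₁
  convex_β₂ : NonnegAntitoneConvexFrom t₀ β₂
  concave_D : PosMonotoneConcaveFrom t₀ D
  monotone_l₁ : NonnegMonotoneFrom t₀ l₁
  monotone_l₂ : NonnegMonotoneFrom t₀ l₂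
  sq_mul_le : ∀ t, t₀ < t → β₀ t ^ 2 * (l₁ t * l₂ t) ≤ D t ^ 2 * (β₁ t * β₂ t)
  dissipative_velocity : ∃ δ > 0, ∀ t, t₀ < t →
    δ ≤ cocoercivityWeight ω β₀ D t * β₁ t ^ 2 - β₀ t / D t * l₁ t ^ 2 - 2 * β₂ t
  dissipative_acceleration : ∃ δ > 0, ∀ t, t₀ < t →
    δ ≤ cocoercivityWeight ω β₀ D t * (β₂ t ^ 2 - 2 * β₁ t) - β₀ t / D t * l₂ t ^ 2
  dissipative_jerk : ∃ δ > 0, ∀ t, t₀ < t → δ ≤ cocoercivityWeight ω β₀ D t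
  coercive : ∃ ε > 0, ∀ t, t₀ < t → ∀ a b d : ℝ, 0 ≤ b → 0 ≤ d →
    ε * (a ^ 2 + b ^ 2 + d ^ 2) ≤ β₁ t * a ^ 2 - 2 * a * d
      - 2 * (cocoercivityWeight ω β₀ D t * β₁ t) * b * d
      + (crossWeight ω β₀ D (fun s => β₁ s * β₂ s) (fun s => l₁ s * l₂ s) t + 2) * b ^ 2
      + cocoercivityWeight ω β₀ D t * β₂ t * d ^ 2

namespace AdmissibleCoefficients

variable {ω t₀ : ℝ} {β₀ β₁ β₂ l₁ l₂ D : ℝ → ℝ}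

lemma exists_pos_mul_le_two_mul_sub (h : AdmissibleCoefficients ω t₀ β₀ β₁ β₂ l₁ l₂ D) :
    ∃ δ > 0, ∀ t, t₀ < t → δ * β₀ t ≤ 2 * ω - D t := by
  obtain ⟨δ, hδ, h_diss⟩ := h.dissipative_jerk
  exact ⟨δ, hδ, fun t ht => (le_div_iff₀ (h.concave_β₀.pos t ht)).1 (h_diss t ht)⟩

lemma D_le_two_mul (h : AdmissibleCoefficients ω t₀ β₀ β₁ β₂ l₁ l₂ D) {t : ℝ} (ht : t₀ < t) :
    D t ≤ 2 * ω := by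
  obtain ⟨δ, hδ, h_le⟩ := h.exists_pos_mul_le_two_mul_sub
  linarith [h_le t ht, mul_pos hδ (h.concave_β₀.pos t ht)]

lemma convex_cocoercivityWeight (h : AdmissibleCoefficients ω t₀ β₀ β₁ β₂ l₁ l₂ D) :
    NonnegAntitoneConvexFrom t₀ (cocoercivityWeight ω β₀ D) :=
  (h.concave_D.const_sub fun _ => h.D_le_two_mul).mul h.concave_β₀.inv

lemma lyapunovWeights (h : AdmissibleCoefficients ω t₀ β₀ β₁ β₂ l₁ l₂ D) :
    LyapunovWeights t₀ β₁ β₂ (fun t => cocoercivityWeight ω β₀ D t * β₁ t)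
      (crossWeight ω β₀ D (fun t => β₁ t * β₂ t) fun t => l₁ t * l₂ t)
      fun t => cocoercivityWeight ω β₀ D t * β₂ t := by
  have h_convex_e := h.convex_cocoercivityWeight.mul h.convex_β₂
  have h_convex_β := h.convex_β₁.mul h.convex_β₂
  have h_monotone_l := h.monotone_l₁.mul h.monotone_l₂
  exact
    { convex_β₂ := h.convex_β₂
      convex_a₂ := h.convex_cocoercivityWeight.mul h.convex_β₁
      differentiableAt_β₁ := h.convex_β₁.differentiableAt
      differentiableAt_a₁ := fun t ht =>
        (hasDerivAt_crossWeight (h.concave_β₀.differentiableAt t ht)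
          (h.concave_D.differentiableAt t ht) (h_convex_β.differentiableAt t ht)
          (h_monotone_l.differentiableAt t ht) (h.concave_β₀.pos t ht).ne'
          (h.concave_D.pos t ht).ne').differentiableAt
      differentiableAt_e := h_convex_e.differentiableAt
      deriv_β₁_nonpos := h.convex_β₁.deriv_nonpos
      deriv_a₁_nonpos := fun t ht =>
        deriv_crossWeight_nonpos h.concave_β₀ h.concave_D h_convex_β h_monotone_l
          (h.D_le_two_mul ht) (h.sq_mul_le t ht) ht
      deriv_e_nonpos := h_convex_e.deriv_nonpos
      coercive := h.coercive }

lemma isBigO_β₀ (h : AdmissibleCoefficients ω t₀ β₀ β₁ β₂ l₁ l₂ D) :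
    β₀ =O[atTop] fun _ => (1 : ℝ) := by
  obtain ⟨δ, hδ, h_le⟩ := h.exists_pos_mul_le_two_mul_sub
  refine .of_bound (2 * ω / δ) ((eventually_gt_atTop t₀).mono fun t ht => ?_)
  rw [Real.norm_of_nonneg (h.concave_β₀.pos t ht).le, norm_one, mul_one, le_div_iff₀' hδ]
  linarith [h_le t ht, h.concave_D.pos t ht]

lemma isBigO_D (h : AdmissibleCoefficients ω t₀ β₀ β₁ β₂ l₁ l₂ D) :
    D =O[atTop] fun _ => (1 : ℝ) := by
  refine .of_bound (2 * ω) ((eventually_gt_atTop t₀).mono fun t ht => ?_)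
  rw [Real.norm_of_nonneg (h.concave_D.pos t ht).le, norm_one, mul_one]
  exact h.D_le_two_mul ht

lemma isBigO_one_of_div_mul_sq_le (h : AdmissibleCoefficients ω t₀ β₀ β₁ β₂ l₁ l₂ D)
    {l b : ℝ → ℝ} (hb : b =O[atTop] fun _ => (1 : ℝ))
    (hl : ∀ t, t₀ < t → β₀ t / D t * l t ^ 2 ≤ cocoercivityWeight ω β₀ D t * b t ^ 2) :
    l =O[atTop] fun _ => (1 : ℝ) := by
  have h_bdd := (h.isBigO_D.mul h.concave_β₀.inv.isBigO_one).mul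
    (h.convex_cocoercivityWeight.isBigO_one.mul (hb.pow 2))
  have h_sq : (fun t => l t ^ 2) =O[atTop] fun t =>
      D t * (β₀ t)⁻¹ * (cocoercivityWeight ω β₀ D t * b t ^ 2) := by
    refine .of_norm_eventuallyLE ((eventually_gt_atTop t₀).mono fun t ht => ?_)
    have hβ₀ := h.concave_β₀.pos t ht
    have hD := h.concave_D.pos t ht
    simp only [norm_pow, Real.norm_eq_abs, sq_abs]
    calc l t ^ 2 = D t * (β₀ t)⁻¹ * (β₀ t / D t * l t ^ 2) := by field_simp
      _ ≤ _ := mul_le_mul_of_nonneg_left (hl t ht) (by positivity)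
  exact .of_pow two_ne_zero ((h_sq.trans h_bdd).congr (fun _ => rfl) fun _ => by simp)

lemma isBigO_l₁ (h : AdmissibleCoefficients ω t₀ β₀ β₁ β₂ l₁ l₂ D) :
    l₁ =O[atTop] fun _ => (1 : ℝ) := by
  obtain ⟨δ, hδ, h_diss⟩ := h.dissipative_velocity
  exact h.isBigO_one_of_div_mul_sq_le h.convex_β₁.isBigO_one fun t ht => by
    linarith [h_diss t ht, h.convex_β₂.nonneg t ht]

lemma isBigO_l₂ (h : AdmissibleCoefficients ω t₀ β₀ β₁ β₂ l₁ l₂ D) :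
    l₂ =O[atTop] fun _ => (1 : ℝ) := by
  obtain ⟨δ, hδ, h_diss⟩ := h.dissipative_acceleration
  exact h.isBigO_one_of_div_mul_sq_le h.convex_β₂.isBigO_one fun t ht => by
    linarith [h_diss t ht, mul_nonneg (h.convex_cocoercivityWeight.nonneg t ht)
      (h.convex_β₁.nonneg t ht)]

end AdmissibleCoefficients

end Admissible

section Limits

lemma tendsto_zero_of_norm_sq_isBigO {E : Type*} [NormedAddCommGroup E] {f : ℝ → E} {g : ℝ → ℝ}
    {a : ℝ} (hf : UniformContinuousOn f (Set.Ici a))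
    (hfg : (fun t => ‖f t‖ ^ 2) =O[atTop] g) (hg : IntegrableAtFilter g atTop) :
    Tendsto f atTop (𝓝 0) := by
  have h_meas : StronglyMeasurableAtFilter (fun t => ‖f t‖ ^ 2) atTop volume :=
    ⟨Set.Ici a, Ici_mem_atTop a,
      (hf.continuousOn.norm.pow 2).aestronglyMeasurable measurableSet_Ici⟩
  exact tendsto_zero_of_integrableAtFilter_norm_sq hf (hfg.integrableAtFilter h_meas hg)

variable {H : Type*} [NormedAddCommGroup H] [InnerProductSpace ℝ H]

lemma tendsto_inner_zero_of_isBigO_one {ι : Type*} {l : Filter ι} {X v : ι → H}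
    (hX : X =O[l] fun _ => (1 : ℝ)) (hv : Tendsto v l (𝓝 0)) :
    Tendsto (fun i => ⟪X i, v i⟫_ℝ) l (𝓝 0) :=
  hv.op_zero_isBoundedUnder_le ((Asymptotics.isBigO_one_iff ℝ).1 hX) (fun v X => ⟪X, v⟫_ℝ)
    fun v X => (norm_inner_le_norm X v).trans_eq (mul_comm _ _)

namespace IsC3CurveFrom

variable {t₀ : ℝ} {X v w z : ℝ → H}

lemma sub_const (hX : IsC3CurveFrom t₀ X v w z) (c : H) :
    IsC3CurveFrom t₀ (fun t => X t - c) v w z :=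
  { hX with hasDerivAt := fun t ht => (hX.hasDerivAt t ht).sub_const c }

lemma tendsto_deriv_norm_sq (hX : IsC3CurveFrom t₀ X v w z) (hX_bdd : X =O[atTop] fun _ => (1 : ℝ))
    (hv : Tendsto v atTop (𝓝 0)) : Tendsto (deriv fun t => ‖X t‖ ^ 2) atTop (𝓝 0) := by
  have h_lim := (tendsto_inner_zero_of_isBigO_one hX_bdd hv).const_mul 2
  rw [mul_zero] at h_lim
  refine h_lim.congr' ?_
  filter_upwards [eventually_gt_atTop t₀] with t ht using (hX.hasDerivAt t ht).norm_sq.deriv.symm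

lemma tendsto_deriv_deriv_norm_sq (hX : IsC3CurveFrom t₀ X v w z)
    (hX_bdd : X =O[atTop] fun _ => (1 : ℝ)) (hv : Tendsto v atTop (𝓝 0))
    (hw : Tendsto w atTop (𝓝 0)) : Tendsto (deriv (deriv fun t => ‖X t‖ ^ 2)) atTop (𝓝 0) := by
  have h_lim := ((tendsto_inner_zero_of_isBigO_one hX_bdd hw).add (hv.inner hv)).const_mul 2
  rw [inner_zero_left, add_zero, mul_zero] at h_lim
  refine h_lim.congr' ?_
  filter_upwards [eventually_gt_atTop t₀] with t ht
  refine (HasDerivAt.deriv ?_).symm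
  refine (((hX.hasDerivAt t ht).inner ℝ (hX.hasDerivAt_vel t ht)).const_mul 2).congr_of_eventuallyEq
    ?_
  filter_upwards [Ioi_mem_nhds ht] with s hs using (hX.hasDerivAt s hs).norm_sq.deriv

end IsC3CurveFrom

end Limits

section DynamicalSystem

variable {H : Type*} [NormedAddCommGroup H] [InnerProductSpace ℝ H] {t₀ ω : ℝ}
  {β₀ β₁ β₂ l₁ l₂ D : ℝ → ℝ} {U : H → H} {x v w z : ℝ → H} {xs : H} {K : NNReal}

/-- A curve `x` with derivatives `v`, `w`, `z` that satisfies the third-order system at every time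
in `(t₀, ∞)`. -/
structure IsClassicalSolution (t₀ : ℝ) (β₀ β₁ β₂ l₁ l₂ : ℝ → ℝ) (U : H → H) (x v w z : ℝ → H) :
    Prop extends IsC3CurveFrom t₀ x v w z where
  ode : ∀ t, t₀ < t →
    z t + β₂ t • w t + β₁ t • v t + β₀ t • U (x t + l₁ t • v t + l₂ t • w t) = 0

lemma IsStrongGlobalSolution.exists_isClassicalSolution [CompleteSpace H]
    (hx : IsStrongGlobalSolution t₀ β₀ β₁ β₂ l₁ l₂ U x) (hU : Continuous U)
    (hβ₀ : ContinuousOn β₀ (Set.Ioi t₀)) (hβ₁ : ContinuousOn β₁ (Set.Ioi t₀))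
    (hβ₂ : ContinuousOn β₂ (Set.Ioi t₀)) (hl₁ : ContinuousOn l₁ (Set.Ioi t₀))
    (hl₂ : ContinuousOn l₂ (Set.Ioi t₀)) :
    ∃ z, IsClassicalSolution t₀ β₀ β₁ β₂ l₁ l₂ U x (deriv x) (deriv (deriv x)) z := by
  obtain ⟨hx₀, hx₁, hx₂, h_ode⟩ := hx
  have hx₀_cont := hx₀.continuousOn.mono Set.Ioi_subset_Ici_self
  have hx₁_cont := hx₁.continuousOn.mono Set.Ioi_subset_Ici_self
  have hx₂_cont := hx₂.continuousOn.mono Set.Ioi_subset_Ici_self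
  set z : ℝ → H := fun t => -(β₂ t • deriv (deriv x) t + β₁ t • deriv x t +
    β₀ t • U (x t + l₁ t • deriv x t + l₂ t • deriv (deriv x) t))
  have hz_cont : ContinuousOn z (Set.Ioi t₀) :=
    (((hβ₂.smul hx₂_cont).add (hβ₁.smul hx₁_cont)).add (hβ₀.smul (hU.comp_continuousOn
      ((hx₀_cont.add (hl₁.smul hx₁_cont)).add (hl₂.smul hx₂_cont))))).neg
  exact ⟨z,
    { hasDerivAt := fun t ht => hx₀.hasDerivAt_of_ae_deriv_eq hx₁_cont (by simp) ht
      hasDerivAt_vel := fun t ht => hx₁.hasDerivAt_of_ae_deriv_eq hx₂_cont (by simp) ht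
      hasDerivAt_acc := fun t ht => hx₂.hasDerivAt_of_ae_deriv_eq hz_cont
        (h_ode.mono fun s hs hts => eq_neg_of_add_eq_zero_left (by
          simpa only [add_assoc] using hs hts)) ht
      continuousOn_jerk := hz_cont
      ode := fun t _ => by simp only [z]; abel }⟩

namespace IsClassicalSolution

lemma exists_pos_lyapunovRate_le (hx : IsClassicalSolution t₀ β₀ β₁ β₂ l₁ l₂ U x v w z)
    (h : AdmissibleCoefficients ω t₀ β₀ β₁ β₂ l₁ l₂ D)
    (hU : ∀ y, ω * ‖U y‖ ^ 2 ≤ ⟪U y, y - xs⟫_ℝ) :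
    ∃ δ > 0, ∀ t, t₀ < t →
      lyapunovRate (β₁ t) (β₂ t) (cocoercivityWeight ω β₀ D t * β₁ t)
          (crossWeight ω β₀ D (fun t => β₁ t * β₂ t) (fun t => l₁ t * l₂ t) t)
          (cocoercivityWeight ω β₀ D t * β₂ t) (x t - xs) (v t) (w t) (z t) ≤
        -(δ * (‖v t‖ ^ 2 + ‖w t‖ ^ 2 + ‖z t‖ ^ 2)) := by
  obtain ⟨δ₁, hδ₁, hA₀⟩ := h.dissipative_velocity
  obtain ⟨δ₂, hδ₂, hB₀⟩ := h.dissipative_acceleration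
  obtain ⟨δ₆, hδ₆, hC₀⟩ := h.dissipative_jerk
  refine ⟨min δ₁ (min δ₂ δ₆), lt_min hδ₁ (lt_min hδ₂ hδ₆), fun t ht => ?_⟩
  have h_coc := hU (x t + l₁ t • v t + l₂ t • w t)
  rw [add_sub_right_comm, add_sub_right_comm] at h_coc
  refine (lyapunovRate_le_of_cocoercive (h.concave_β₀.pos t ht) (h.concave_D.pos t ht)
    (hx.ode t ht) h_coc).trans (neg_le_neg ?_)
  rw [mul_add, mul_add]
  gcongr
  · exact (min_le_left _ _).trans (hA₀ t ht)
  · exact ((min_le_right _ _).trans (min_le_left _ _)).trans (hB₀ t ht)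
  · exact ((min_le_right _ _).trans (min_le_right _ _)).trans (hC₀ t ht)

lemma isBigO_sub_and_velocity_and_acceleration
    (hx : IsClassicalSolution t₀ β₀ β₁ β₂ l₁ l₂ U x v w z)
    (h : AdmissibleCoefficients ω t₀ β₀ β₁ β₂ l₁ l₂ D)
    (hU : ∀ y, ω * ‖U y‖ ^ 2 ≤ ⟪U y, y - xs⟫_ℝ) :
    (fun t => x t - xs) =O[atTop] (fun _ => (1 : ℝ)) ∧ v =O[atTop] (fun _ => (1 : ℝ)) ∧
      w =O[atTop] fun _ => (1 : ℝ) := by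
  obtain ⟨δ, hδ, h_rate⟩ := hx.exists_pos_lyapunovRate_le h hU
  have h_rate_nonpos (t : ℝ) (ht : t₀ < t) := (h_rate t ht).trans (neg_nonpos.2 (by positivity))
  have hX := hx.sub_const xs
  exact ⟨h.lyapunovWeights.isBigO_position hX h_rate_nonpos,
    h.lyapunovWeights.isBigO_velocity_and_acceleration hX h_rate_nonpos⟩

lemma integrableAtFilter_norm_sq (hx : IsClassicalSolution t₀ β₀ β₁ β₂ l₁ l₂ U x v w z)
    (h : AdmissibleCoefficients ω t₀ β₀ β₁ β₂ l₁ l₂ D)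
    (hU : ∀ y, ω * ‖U y‖ ^ 2 ≤ ⟪U y, y - xs⟫_ℝ) :
    IntegrableAtFilter (fun t => ‖v t‖ ^ 2 + ‖w t‖ ^ 2 + ‖z t‖ ^ 2) atTop := by
  obtain ⟨δ, hδ, h_rate⟩ := hx.exists_pos_lyapunovRate_le h hU
  exact h.lyapunovWeights.integrableAtFilter_norm_sq (hx.sub_const xs) hδ h_rate

lemma isBigO_jerk (hx : IsClassicalSolution t₀ β₀ β₁ β₂ l₁ l₂ U x v w z)
    (h : AdmissibleCoefficients ω t₀ β₀ β₁ β₂ l₁ l₂ D)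
    (hU : ∀ y, ω * ‖U y‖ ^ 2 ≤ ⟪U y, y - xs⟫_ℝ) (hLip : LipschitzWith K U) (hxs : U xs = 0) :
    z =O[atTop] fun _ => (1 : ℝ) := by
  obtain ⟨hX, hv, hw⟩ := hx.isBigO_sub_and_velocity_and_acceleration h hU
  set φ : ℝ → H := fun t => x t + l₁ t • v t + l₂ t • w t
  have hφ : (fun t => φ t - xs) =O[atTop] fun _ => (1 : ℝ) := by
    have h_sum := (hX.add (by simpa using h.isBigO_l₁.smul hv)).add
      (by simpa using h.isBigO_l₂.smul hw)
    simpa only [φ, add_sub_right_comm] using h_sum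
  have hUφ : (fun t => U (φ t)) =O[atTop] fun _ => (1 : ℝ) := by
    refine (Asymptotics.IsBigO.of_bound K (.of_forall fun t => ?_)).trans hφ
    simpa only [hxs, sub_zero] using hLip.norm_sub_le (φ t) xs
  have h_sum : (fun t => -(β₂ t • w t + β₁ t • v t + β₀ t • U (φ t))) =O[atTop]
      fun _ => (1 : ℝ) := by
    simpa using (((h.convex_β₂.isBigO_one.smul hw).add (h.convex_β₁.isBigO_one.smul hv)).add
      (h.isBigO_β₀.smul hUφ)).neg_left
  refine h_sum.congr' ?_ .rfl
  filter_upwards [eventually_gt_atTop t₀] with t ht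
  refine (eq_neg_of_add_eq_zero_left ?_).symm
  rw [← add_assoc, ← add_assoc]
  exact hx.ode t ht

/- `β₀ U(φ)` is a combination of `v`, `w`, `z` by the equation, and `U(x) - U(φ)` is Lipschitz in
`x - φ = -(λ₁ v + λ₂ w)`. -/
lemma isBigO_norm_operator_sq (hx : IsClassicalSolution t₀ β₀ β₁ β₂ l₁ l₂ U x v w z)
    (h : AdmissibleCoefficients ω t₀ β₀ β₁ β₂ l₁ l₂ D) (hLip : LipschitzWith K U) :
    (fun t => ‖U (x t)‖ ^ 2) =O[atTop] fun t => ‖v t‖ ^ 2 + ‖w t‖ ^ 2 + ‖z t‖ ^ 2 := by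
  set g : ℝ → ℝ := fun t => √(‖v t‖ ^ 2 + ‖w t‖ ^ 2 + ‖z t‖ ^ 2)
  have h_le {f : ℝ → H} (hf : ∀ t, ‖f t‖ ^ 2 ≤ ‖v t‖ ^ 2 + ‖w t‖ ^ 2 + ‖z t‖ ^ 2) :
      f =O[atTop] g := .of_norm_le fun t => Real.le_sqrt_of_sq_le (hf t)
  have hv : v =O[atTop] g := h_le fun t => by linarith [sq_nonneg ‖w t‖, sq_nonneg ‖z t‖]
  have hw : w =O[atTop] g := h_le fun t => by linarith [sq_nonneg ‖v t‖, sq_nonneg ‖z t‖]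
  have hz : z =O[atTop] g := h_le fun t => by linarith [sq_nonneg ‖v t‖, sq_nonneg ‖w t‖]
  have h_smul {c : ℝ → ℝ} {f : ℝ → H} (hc : c =O[atTop] fun _ => (1 : ℝ)) (hf : f =O[atTop] g) :
      (fun t => c t • f t) =O[atTop] g := by simpa using hc.smul hf
  set φ : ℝ → H := fun t => x t + l₁ t • v t + l₂ t • w t
  have hUφ : (fun t => U (φ t)) =O[atTop] g := by
    have h_sum := (h_smul h.concave_β₀.inv.isBigO_one ((hz.add
      (h_smul h.convex_β₂.isBigO_one hw)).add (h_smul h.convex_β₁.isBigO_one hv))).neg_left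
    refine h_sum.congr' ?_ .rfl
    filter_upwards [eventually_gt_atTop t₀] with t ht
    rw [eq_neg_of_add_eq_zero_left (hx.ode t ht), smul_neg, neg_neg,
      inv_smul_smul₀ (h.concave_β₀.pos t ht).ne']
  have h_diff : (fun t => U (φ t) - U (x t)) =O[atTop] g := by
    refine (Asymptotics.IsBigO.of_bound K (.of_forall fun t => ?_)).trans
      ((h_smul h.isBigO_l₁ hv).add (h_smul h.isBigO_l₂ hw))
    simpa only [φ, add_assoc, add_sub_cancel_left] using hLip.norm_sub_le (φ t) (x t)
  have hUx : (fun t => U (x t)) =O[atTop] g := by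
    simpa only [sub_sub_cancel] using hUφ.sub h_diff
  refine (hUx.norm_left.pow 2).congr_right fun t => Real.sq_sqrt (by positivity)

theorem tendsto_zero (hx : IsClassicalSolution t₀ β₀ β₁ β₂ l₁ l₂ U x v w z)
    (h : AdmissibleCoefficients ω t₀ β₀ β₁ β₂ l₁ l₂ D)
    (hU : ∀ y, ω * ‖U y‖ ^ 2 ≤ ⟪U y, y - xs⟫_ℝ) (hLip : LipschitzWith K U) (hxs : U xs = 0) :
    Tendsto v atTop (𝓝 0) ∧ Tendsto w atTop (𝓝 0) ∧ Tendsto (fun t => U (x t)) atTop (𝓝 0) := by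
  obtain ⟨-, hv, hw⟩ := hx.isBigO_sub_and_velocity_and_acceleration h hU
  have h_int := hx.integrableAtFilter_norm_sq h hU
  obtain ⟨a₀, hx_unif⟩ := exists_uniformContinuousOn_Ici_of_isBigO_one hx.hasDerivAt hv
  obtain ⟨a₁, hv_unif⟩ := exists_uniformContinuousOn_Ici_of_isBigO_one hx.hasDerivAt_vel hw
  obtain ⟨a₂, hw_unif⟩ := exists_uniformContinuousOn_Ici_of_isBigO_one hx.hasDerivAt_acc
    (hx.isBigO_jerk h hU hLip hxs)
  refine ⟨tendsto_zero_of_norm_sq_isBigO hv_unif (.of_norm_le fun t => ?_) h_int,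
    tendsto_zero_of_norm_sq_isBigO hw_unif (.of_norm_le fun t => ?_) h_int,
    tendsto_zero_of_norm_sq_isBigO (hLip.uniformContinuous.comp_uniformContinuousOn hx_unif)
      (hx.isBigO_norm_operator_sq h hLip) h_int⟩
  · rw [norm_pow, norm_norm]
    linarith [sq_nonneg ‖w t‖, sq_nonneg ‖z t‖]
  · rw [norm_pow, norm_norm]
    linarith [sq_nonneg ‖v t‖, sq_nonneg ‖z t‖]

theorem tendsto_deriv_norm_sub_sq (hx : IsClassicalSolution t₀ β₀ β₁ β₂ l₁ l₂ U x v w z)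
    (h : AdmissibleCoefficients ω t₀ β₀ β₁ β₂ l₁ l₂ D)
    (hU : ∀ y, ω * ‖U y‖ ^ 2 ≤ ⟪U y, y - xs⟫_ℝ) (hLip : LipschitzWith K U) (hxs : U xs = 0) :
    Tendsto (deriv fun t => ‖x t - xs‖ ^ 2) atTop (𝓝 0) ∧
      Tendsto (deriv (deriv fun t => ‖x t - xs‖ ^ 2)) atTop (𝓝 0) := by
  obtain ⟨hX_bdd, -, -⟩ := hx.isBigO_sub_and_velocity_and_acceleration h hU
  obtain ⟨hv, hw, -⟩ := hx.tendsto_zero h hU hLip hxs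
  exact ⟨(hx.sub_const xs).tendsto_deriv_norm_sq hX_bdd hv,
    (hx.sub_const xs).tendsto_deriv_deriv_norm_sq hX_bdd hv hw⟩

end IsClassicalSolution

end DynamicalSystem

theorem stmt4
    {H : Type*} [NormedAddCommGroup H] [InnerProductSpace ℝ H] [CompleteSpace H]
    (U : H → H) (ωu Lu t0 : ℝ) (hωu : 0 < ωu) (hLu : 0 < Lu) (ht0 : 0 ≤ t0)
    (hquasi : ∀ x xs : H, U xs = 0 → ωu * ‖U x‖ ^ 2 ≤ ⟪U x, x - xs⟫_ℝ)
    (hLip : ∀ x y : H, ‖U x - U y‖ ≤ Lu * ‖x - y‖)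
    (hZ : ∃ z : H, U z = 0)
    (β0 β1 β2 lam1 lam2 D : ℝ → ℝ)
    (hβ0pos : ∀ t, t0 ≤ t → 0 < β0 t)
    (hβ1pos : ∀ t, t0 ≤ t → 0 < β1 t)
    (hβ2pos : ∀ t, t0 ≤ t → 0 < β2 t)
    (hβ0d : ∀ t, t0 ≤ t → DifferentiableAt ℝ β0 t ∧ DifferentiableAt ℝ (deriv β0) t)
    (hβ1d : ∀ t, t0 ≤ t → DifferentiableAt ℝ β1 t ∧ DifferentiableAt ℝ (deriv β1) t)
    (hβ2d : ∀ t, t0 ≤ t → DifferentiableAt ℝ β2 t ∧ DifferentiableAt ℝ (deriv β2) t)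
    (hβ2sign : ∀ t, t0 ≤ t → deriv β2 t ≤ 0 ∧ 0 ≤ deriv (deriv β2) t)
    (hβ1sign : ∀ t, t0 ≤ t → deriv β1 t ≤ 0 ∧ 0 ≤ deriv (deriv β1) t)
    (hβ0sign : ∀ t, t0 ≤ t → 0 ≤ deriv β0 t ∧ deriv (deriv β0) t ≤ 0)
    (hlam1nn : ∀ t, t0 ≤ t → 0 ≤ lam1 t)
    (hlam2nn : ∀ t, t0 ≤ t → 0 ≤ lam2 t)
    (hlam1d : ∀ t, t0 ≤ t → DifferentiableAt ℝ lam1 t ∧ 0 ≤ deriv lam1 t)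
    (hlam2d : ∀ t, t0 ≤ t → DifferentiableAt ℝ lam2 t ∧ 0 ≤ deriv lam2 t)
    (hDpos : ∀ t, t0 ≤ t → 0 < D t)
    (hDd : ∀ t, t0 ≤ t → DifferentiableAt ℝ D t ∧ DifferentiableAt ℝ (deriv D) t)
    (hDsup : ∃ Dbar : ℝ, (∀ t, t0 ≤ t → D t ≤ Dbar) ∧ Dbar < 2 * ωu)
    (hDlow : ∀ t, t0 ≤ t → β0 t ^ 2 * lam1 t * lam2 t / (β1 t * β2 t) ≤ D t ^ 2)
    (hDsign : ∀ t, t0 ≤ t → 0 ≤ deriv D t ∧ deriv (deriv D) t ≤ 0)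
    (δ1 δ2 δ3 δ4 δ5 δ6 c1 : ℝ)
    (hδ1 : 0 < δ1) (hδ2 : 0 < δ2) (hδ3 : 0 < δ3)
    (hδ4 : 0 < δ4) (hδ5 : 0 < δ5) (hδ6 : 0 < δ6)
    (hc1 : IsGLB (β1 '' Set.Ici t0) c1)
    (hA0 : ∀ t, t0 ≤ t →
      δ1 ≤ (2 * ωu - D t) * β1 t ^ 2 / β0 t - β0 t / D t * lam1 t ^ 2 - 2 * β2 t)
    (hB0 : ∀ t, t0 ≤ t →
      δ2 ≤ (2 * ωu - D t) / β0 t * (β2 t ^ 2 - 2 * β1 t) - β0 t / D t * lam2 t ^ 2)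
    (hA1 : ∀ t, t0 ≤ t →
      δ3 ≤ ((2 * ωu - D t) * β1 t * β2 t / β0 t - β0 t / D t * (lam1 t * lam2 t) - 3) + 2)
    (hA2 : ∀ t, t0 ≤ t → (2 * ωu - D t) * β1 t / β0 t ≤ δ4)
    (hB1 : ∀ t, t0 ≤ t → δ5 ≤ (2 * ωu - D t) * β2 t / β0 t)
    (hC0 : ∀ t, t0 ≤ t → δ6 ≤ (2 * ωu - D t) / β0 t)
    (hkey : 1 / c1 < δ5 - δ4 ^ 2 / δ3)
    (x : ℝ → H) (hx : IsStrongGlobalSolution t0 β0 β1 β2 lam1 lam2 U x) :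
    (∀ xs : H, U xs = 0 →
      Tendsto (deriv (fun t => ‖x t - xs‖ ^ 2)) atTop (𝓝 0) ∧
      Tendsto (deriv (deriv (fun t => ‖x t - xs‖ ^ 2))) atTop (𝓝 0)) ∧
    Tendsto (fun t => ‖U (x t)‖) atTop (𝓝 0) := by
  simp only [mul_div_right_comm, mul_assoc (_ / _)] at hA0 hA1 hA2 hB1
  have hc1_pos : 0 < c1 :=
    pos_of_isGLB_image_Ici hδ1 hδ4 hc1 (fun t ht => (hβ1pos t ht).le)
      (fun t ht => add_nonneg (mul_nonneg (div_pos (hβ0pos t ht) (hDpos t ht)).le (sq_nonneg _))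
        (mul_nonneg zero_le_two (hβ2pos t ht).le))
      (fun t ht => (hA0 t ht).trans_eq (sub_sub _ _ _)) hA2
  have h_adm : AdmissibleCoefficients ωu t0 β0 β1 β2 lam1 lam2 D :=
    { concave_β₀ := .of_forall_ge hβ0pos hβ0d hβ0sign
      convex_β₁ := .of_forall_ge hβ1pos hβ1d hβ1sign
      convex_β₂ := .of_forall_ge hβ2pos hβ2d hβ2sign
      concave_D := .of_forall_ge hDpos hDd hDsign
      monotone_l₁ := .of_forall_ge hlam1nn hlam1d
      monotone_l₂ := .of_forall_ge hlam2nn hlam2d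
      sq_mul_le := fun t ht => by
        simpa only [mul_assoc] using
          (div_le_iff₀ (mul_pos (hβ1pos t ht.le) (hβ2pos t ht.le))).1 (hDlow t ht.le)
      dissipative_velocity := ⟨δ1, hδ1, fun t ht => hA0 t ht.le⟩
      dissipative_acceleration := ⟨δ2, hδ2, fun t ht => hB0 t ht.le⟩
      dissipative_jerk := ⟨δ6, hδ6, fun t ht => hC0 t ht.le⟩
      coercive := exists_pos_coercive_of_bounds hc1_pos hδ3 hkey
        (fun t ht => hc1.1 ⟨t, ht, rfl⟩) hA2 hA1 hB1 }
  have hLip' : LipschitzWith Lu.toNNReal U := .of_dist_le' (by simpa only [dist_eq_norm] using hLip)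
  obtain ⟨z, hxz⟩ := hx.exists_isClassicalSolution hLip'.continuous h_adm.concave_β₀.continuousOn
    h_adm.convex_β₁.continuousOn h_adm.convex_β₂.continuousOn h_adm.monotone_l₁.continuousOn
    h_adm.monotone_l₂.continuousOn
  obtain ⟨zs, hzs⟩ := hZ
  exact ⟨fun xs hxs => hxz.tendsto_deriv_norm_sub_sq h_adm (hquasi · xs hxs) hLip' hxs,
    (hxz.tendsto_zero h_adm (hquasi · zs hzs) hLip' hzs).2.2.norm.trans (by rw [norm_zero])⟩
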